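/- The generalized Wang homomorphism satisfies the Leibniz rule: for cohomology classes α₁, α₂ of the fiber M of a simple fibration over an m-dimensional base whose Leray–Serre differentials are all trivial except possibly on the E_m term, ∂(α₁ ∪ α₂) = ∂(α₁) ∪ α₂ ± α₁ ∪ ∂(α₂), with the sign determined by the degree of α₁. -/

import Mathlib

/-!
Apply the derivation `∂_m` to `1 ⊗ (α₁ ∪ α₂) = (1 ⊗ α₁) · (1 ⊗ α₂)`. In the second summand of the
graded Leibniz rule, `β` has to be moved past `1 ⊗ α₁`, which by graded commutativity costs the
sign `(-1) ^ (deg α₁ · m)`; together with the sign `(-1) ^ deg α₁` of the derivation this gives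
`(-1) ^ (deg α₁ · (m + 1)) = (-1) ^ (deg α₁ · (m - 1))`. Both sides of the claim therefore agree
after multiplication by `β`, and this multiplication is injective on `1 ⊗ H^*(M)`.
-/


/-- A graded `ℚ`-algebra, modelling the total rational cohomology of a space:
a ring `carrier` together with distinguished `ℚ`-submodules `grade i` of
homogeneous degree-`i` elements. -/
structure GradedQAlgebra where
  carrier : Type
  [ring : Ring carrier]
  [alg : Algebra ℚ carrier]
  grade : ℤ → Submodule ℚ carrier
  one_mem : (1 : carrier) ∈ grade 0
  mul_mem : ∀ {i j : ℤ} {x y : carrier}, x ∈ grade i → y ∈ grade j → x * y ∈ grade (i + j)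

attribute [instance] GradedQAlgebra.ring GradedQAlgebra.alg

/-- The data of the Leray–Serre cohomology spectral sequence of a **simple**
fibration `M → P → B` over an `m`-dimensional base (i.e. the local coefficient
system is trivial and `B` is an `m`-dimensional finite CW-complex with
one-dimensional top cohomology) all of whose differentials are trivial except
possibly those on the `E_m` term, together with the generalized Wang
homomorphism it defines.

* `A` is the rational cohomology `H^*(M)` of the fiber;
* `E` is the graded-commutative algebra `E_m = E_2 = H^*(B) ⊗ H^*(M)`,
  graded by total degree;
* `incl` is the inclusion `H^*(M) ≅ H^0(B) ⊗ H^*(M) ↪ E_m`, `α ↦ 1 ⊗ α`;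
* `beta` is the generator `β ∈ H^m(B)` dual to the fundamental class `[B]`;
* `d` is the differential `∂_m` (of total degree `1`), a graded derivation;
* `wang` is the generalized Wang homomorphism `∂ : H^k(M) → H^{k-m+1}(M)`,
  characterized by the defining formula `∂_m(1 ⊗ α) = β ⊗ ∂α` (here
  `β ⊗ ∂α = β · (1 ⊗ ∂α)` in `E_m`; since `H^m(B)` is one-dimensional,
  multiplication by `β` identifies `H^*(M)` with the column `E_m^{m,*}`,
  whence the injectivity field). -/
structure WangSystem (m : ℕ) where
  /-- `H^*(M;ℚ)`, the cohomology of the fiber -/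
  A : GradedQAlgebra
  /-- the `E_m = E_2` page `H^*(B) ⊗ H^*(M)` -/
  E : GradedQAlgebra
  /-- `α ↦ 1 ⊗ α` -/
  incl : A.carrier →ₐ[ℚ] E.carrier
  incl_grade : ∀ {i : ℤ} {x : A.carrier}, x ∈ A.grade i → incl x ∈ E.grade i
  /-- the generator `β ∈ H^m(B)` dual to `[B]` -/
  beta : E.carrier
  beta_grade : beta ∈ E.grade m
  /-- graded commutativity of the page -/
  comm : ∀ {i j : ℤ} {x y : E.carrier}, x ∈ E.grade i → y ∈ E.grade j →
    x * y = ((-1 : ℚ) ^ (i * j)) • (y * x)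
  /-- the differential `∂_m`, the only possibly nontrivial differential -/
  d : E.carrier →ₗ[ℚ] E.carrier
  /-- the differential is a graded derivation -/
  d_leibniz : ∀ {i : ℤ} {x : E.carrier} (y : E.carrier), x ∈ E.grade i →
    d (x * y) = d x * y + ((-1 : ℚ) ^ i) • (x * d y)
  /-- multiplication by `β` identifies `H^*(M)` with `E_m^{m,*} = H^m(B) ⊗ H^*(M)` -/
  beta_mul_incl_injective : Function.Injective fun a : A.carrier => beta * incl a
  /-- the generalized Wang homomorphism `∂` -/
  wang : A.carrier →ₗ[ℚ] A.carrier
  wang_grade : ∀ {i : ℤ} {x : A.carrier}, x ∈ A.grade i → wang x ∈ A.grade (i - m + 1)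
  /-- the defining property `∂_m(1 ⊗ α) = β ⊗ ∂α` -/
  d_incl : ∀ a : A.carrier, d (incl a) = beta * incl (wang a)

/-- **The generalized Wang homomorphism satisfies the Leibniz rule**: for
cohomology classes `α₁, α₂` of the fiber `M` of a simple fibration over an
`m`-dimensional base whose Leray–Serre differentials are all trivial except
possibly on the `E_m` term, with `α₁` homogeneous,
`∂(α₁ ∪ α₂) = ∂(α₁) ∪ α₂ ± α₁ ∪ ∂(α₂)`, the sign `(-1)^{deg α₁ · (m-1)}`
being determined by the degree of `α₁` (the Wang homomorphism shifts degrees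
by `m − 1`). -/
theorem wang_leibniz {m : ℕ} (W : WangSystem m) {i : ℤ} {x : W.A.carrier}
    (y : W.A.carrier) (hx : x ∈ W.A.grade i) :
    W.wang (x * y) =
      W.wang x * y + ((-1 : ℚ) ^ (i * ((m : ℤ) - 1))) • (x * W.wang y) := by
  -- The exponents `i + i * m` and `i * (m - 1)` differ by `2 * i`.
  have hsign : (-1 : ℚ) ^ i * (-1 : ℚ) ^ (i * (m : ℤ)) = (-1 : ℚ) ^ (i * ((m : ℤ) - 1)) := by
    have h0 : (-1 : ℚ) ≠ 0 := by norm_num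
    have heven : (-1 : ℚ) ^ (2 * i) = 1 := (even_two_mul i).neg_one_zpow
    rw [← zpow_add₀ h0, show i + i * (m : ℤ) = i * ((m : ℤ) - 1) + 2 * i by ring,
      zpow_add₀ h0, heven, mul_one]
  apply W.beta_mul_incl_injective
  change W.beta * W.incl _ = W.beta * W.incl _
  have hxE : W.incl x ∈ W.E.grade i := W.incl_grade hx
  rw [← W.d_incl, map_mul, W.d_leibniz _ hxE, W.d_incl, W.d_incl, ← mul_assoc (W.incl x),
    W.comm hxE W.beta_grade, smul_mul_assoc, smul_smul, hsign, map_add, map_smul, map_mul,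
    map_mul, mul_add, mul_smul_comm, mul_assoc, mul_assoc]
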